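/- Fix integers G, K with 1 ≤ G ≤ K. Suppose: r₀ : ℝ^G → ℝ^G is a locally Lipschitz bijection with locally Lipschitz inverse, differentiable with det Dr₀(y) > 0 at Lebesgue-almost every y ∈ ℝ^G; r₁ : ℝ^K → ℝ^G is locally Lipschitz, surjective, and differentiable with rank Dr₁(x) = G at almost every x ∈ ℝ^K; f_U is an admissible density on ℝ^G satisfying the local-maximum condition. Let r̃₀ : ℝ^G → ℝ^G be any locally Lipschitz bijection with det Dr̃₀(y) > 0 at almost every y, and let r̃₁ : ℝ^K → ℝ^G be any locally Lipschitz function. Then there exists an admissible density f_Ũ on ℝ^G such that f_U(r₀(y) + r₁(x))·det Dr₀(y) = f_Ũ(r̃₀(y) + r̃₁(x))·det Dr̃₀(y) for Lebesgue-almost every (y, x) ∈ ℝ^G × ℝ^K, if and only if there exists Q ∈ SO(G) such that r̃₀(y) + r̃₁(x) = Q(r₀(y) + r₁(x)) for all (y, x) ∈ ℝ^G × ℝ^K. -/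

import Mathlib

open MeasureTheory Matrix

noncomputable section

/-- `E n` is Euclidean space `ℝ^n`. -/
abbrev E (n : ℕ) : Type := EuclideanSpace ℝ (Fin n)

/-- Action of a matrix on a Euclidean vector. -/
def mulVecE {m n : ℕ} (A : Matrix (Fin m) (Fin n) ℝ) (x : E n) : E m := WithLp.toLp 2 (A.mulVec x)

/-- An admissible density on `ℝ^G`: continuously differentiable, everywhere strictly positive,
integrating to one, with zero mean and identity covariance (stated componentwise). -/
def AdmissibleDensity {G : ℕ} (ρ : E G → ℝ) : Prop :=
  ContDiff ℝ 1 ρ ∧ (∀ u, 0 < ρ u) ∧ ((∫ u, ρ u) = 1) ∧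
    (∀ i, (∫ u : E G, u i * ρ u) = 0) ∧
    (∀ i j, (∫ u : E G, u i * u j * ρ u) = if i = j then 1 else 0)

/-- The local-maximum condition: `ρ` has a local maximum at some `u₀`, is twice continuously
differentiable in a neighbourhood of `u₀`, and has negative definite Hessian there. -/
def LocalMaxCondition {G : ℕ} (ρ : E G → ℝ) : Prop :=
  ∃ u₀ : E G, IsLocalMax ρ u₀ ∧ ContDiffAt ℝ 2 ρ u₀ ∧
    ∀ v : E G, v ≠ 0 → iteratedFDeriv ℝ 2 ρ u₀ ![v, v] < 0

open Set Filter Topology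

/-- A continuous map which is pointwise locally `c`-Lipschitz at each point is `c`-Lipschitz. -/
lemma lip_of_pointwise {V W : Type*} [NormedAddCommGroup V] [NormedSpace ℝ V]
    [NormedAddCommGroup W] (k : V → W) (hk : Continuous k) (c : ℝ)
    (h : ∀ w, ∀ᶠ z in 𝓝 w, ‖k z - k w‖ ≤ c * ‖z - w‖) (z w : V) :
    ‖k z - k w‖ ≤ c * ‖z - w‖ := by
  set γ : ℝ → V := fun t => w + t • (z - w) with hγ
  have hγc : Continuous γ := by fun_prop
  have key := image_le_of_liminf_slope_right_le_deriv_boundary (a := 0) (b := 1)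
    (f := fun t => ‖k (γ t) - k w‖) (B := fun t => c * ‖z - w‖ * t) (B' := fun _ => c * ‖z - w‖)
    (by fun_prop) (by simp [hγ]) (by fun_prop)
    (fun x _ => by simpa using ((hasDerivAt_id x).const_mul (c * ‖z - w‖)).hasDerivWithinAt)
    ?_ (x := 1) (by simp)
  · simpa [hγ] using key
  · intro x hx r hr
    apply Eventually.frequently
    have h1 : ∀ᶠ t in 𝓝[>] x, ‖k (γ t) - k (γ x)‖ ≤ c * ‖γ t - γ x‖ :=
      (hγc.continuousAt.eventually (h (γ x))).filter_mono nhdsWithin_le_nhds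
    filter_upwards [h1, self_mem_nhdsWithin] with t ht htx
    have htx : x < t := htx
    have e : γ t - γ x = (t - x) • (z - w) := by simp [hγ, sub_smul]
    rw [e, norm_smul, Real.norm_of_nonneg (by linarith)] at ht
    refine lt_of_le_of_lt ?_ hr
    rw [slope_def_field, div_le_iff₀ (by linarith)]
    have := norm_sub_norm_le (k (γ t) - k w) (k (γ x) - k w)
    rw [sub_sub_sub_cancel_right] at this
    linarith

/-- Quadratic comparison implies norm comparison. -/
lemma sq_compare {a b ε : ℝ} (ha : 0 ≤ a) (hb : 0 ≤ b) (_hε : 0 < ε) (hε1 : ε < 1)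
    (h : (1 - ε) * a ^ 2 ≤ (1 + ε) * b ^ 2) : a ≤ √((1 + ε) / (1 - ε)) * b := by
  have h1 : a ^ 2 ≤ (1 + ε) / (1 - ε) * b ^ 2 := by
    rw [div_mul_eq_mul_div, le_div_iff₀ (by linarith)]; linarith
  have h2 : a = √(a ^ 2) := (Real.sqrt_sq ha).symm
  rw [h2]
  calc √(a ^ 2) ≤ √((1 + ε) / (1 - ε) * b ^ 2) := Real.sqrt_le_sqrt h1
    _ = _ := by rw [Real.sqrt_mul' _ (by positivity), Real.sqrt_sq hb]

lemma le_of_eps {a b : ℝ}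
    (h : ∀ ε : ℝ, 0 < ε → ε < 1 → a ≤ √((1 + ε) / (1 - ε)) * b) : a ≤ b := by
  have ht : Tendsto (fun ε : ℝ => √((1 + ε) / (1 - ε)) * b) (𝓝[>] 0) (𝓝 b) := by
    have : ContinuousAt (fun ε : ℝ => √((1 + ε) / (1 - ε)) * b) 0 := by
      refine ContinuousAt.mul (ContinuousAt.sqrt (ContinuousAt.div ?_ ?_ (by norm_num))) ?_ <;>
        fun_prop
    have := this.tendsto.mono_left (nhdsWithin_le_nhds (s := Ioi 0))
    simpa using this
  refine ge_of_tendsto ht ?_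
  filter_upwards [Ioo_mem_nhdsGT (zero_lt_one (α := ℝ))] with ε hε
  exact h ε hε.1 hε.2

/-- Rigidity lemma. -/
lemma rigid {V : Type*} [NormedAddCommGroup V] [NormedSpace ℝ V]
    (k : V ≃ₜ V) (w₀ : V) (hk : HasFDerivAt k (ContinuousLinearMap.id ℝ V) w₀)
    (f g : V → ℝ) (m : ℝ) (hf : (fun v => m - f v - ‖v‖ ^ 2) =o[𝓝 0] fun v => ‖v‖ ^ 2)
    (hfg : ∀ z w, g (k z - k w) = f (z - w)) : ∀ z, k z = z + k 0 := by
  -- expansion of g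
  have hks : HasFDerivAt k.symm (ContinuousLinearMap.id ℝ V) (k w₀) := by
    have := HasFDerivAt.of_local_left_inverse (f := k) (g := k.symm)
      (f' := ContinuousLinearEquiv.refl ℝ V) (a := k w₀) k.symm.continuous.continuousAt
      (by simpa using hk) (by simp)
    simpa using this
  set η : V → V := fun v => k.symm (k w₀ + v) - w₀ with hη
  have hηo : (fun v => η v - v) =o[𝓝 0] fun v => v := by
    have := hasFDerivAt_iff_isLittleO_nhds_zero.1 hks
    simpa [hη] using this
  have hη0 : Tendsto η (𝓝 0) (𝓝 0) := by
    have : Continuous η := by fun_prop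
    simpa [hη] using this.tendsto 0
  have hgη : ∀ v, g v = f (η v) := by
    intro v
    rw [hη, ← hfg]; simp
  have hηO : η =O[𝓝 0] fun v => v := by
    have := hηo.isBigO.add (Asymptotics.isBigO_refl (fun v : V => v) (𝓝 0))
    simpa using this
  have hg : (fun v => m - g v - ‖v‖ ^ 2) =o[𝓝 0] fun v => ‖v‖ ^ 2 := by
    have h1 : (fun v => m - f (η v) - ‖η v‖ ^ 2) =o[𝓝 0] fun v => ‖v‖ ^ 2 :=
      (hf.comp_tendsto hη0).trans_isBigO (hηO.norm_norm.pow 2)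
    have h2 : (fun v => ‖η v‖ ^ 2 - ‖v‖ ^ 2) =o[𝓝 0] fun v => ‖v‖ ^ 2 := by
      have e : (fun v => ‖η v‖ ^ 2 - ‖v‖ ^ 2) = fun v => (‖η v‖ - ‖v‖) * (‖η v‖ + ‖v‖) := by
        ext v; ring
      rw [e]
      have a1 : (fun v => ‖η v‖ - ‖v‖) =o[𝓝 0] fun v => ‖v‖ := by
        refine Asymptotics.IsBigO.trans_isLittleO ?_ hηo.norm_right
        refine Asymptotics.IsBigO.of_bound 1 (Eventually.of_forall fun v => ?_)
        simpa using abs_norm_sub_norm_le (η v) v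
      have a2 : (fun v => ‖η v‖ + ‖v‖) =O[𝓝 0] fun v => ‖v‖ :=
        hηO.norm_norm.add (Asymptotics.isBigO_refl _ _)
      simpa [sq] using a1.mul_isBigO a2
    refine (h1.add h2).congr_left fun v => ?_
    rw [hgη]; ring
  have bd : ∀ (F : V → ℝ), ((fun v => m - F v - ‖v‖ ^ 2) =o[𝓝 0] fun v => ‖v‖ ^ 2) → ∀ ε > 0,
      ∀ᶠ v in 𝓝 0, (1 - ε) * ‖v‖ ^ 2 ≤ m - F v ∧ m - F v ≤ (1 + ε) * ‖v‖ ^ 2 := by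
    intro F hF ε hε
    filter_upwards [hF.def hε] with v hv
    rw [Real.norm_eq_abs, Real.norm_of_nonneg (by positivity), abs_le] at hv
    constructor <;> nlinarith
  have sub0 : ∀ w : V, Tendsto (fun z => z - w) (𝓝 w) (𝓝 0) := fun w => by
    have : Continuous fun z : V => z - w := by fun_prop
    simpa using this.tendsto w
  have up : ∀ z w, ‖k z - k w‖ ≤ ‖z - w‖ := by
    intro z w
    refine le_of_eps fun ε h0 h1 => ?_
    refine lip_of_pointwise k k.continuous _ (fun w => ?_) z w
    have hkw : Tendsto (fun z => k z - k w) (𝓝 w) (𝓝 0) :=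
      (sub0 (k w)).comp k.continuous.continuousAt
    filter_upwards [(sub0 w).eventually (bd f hf ε h0), hkw.eventually (bd g hg ε h0)] with z hz hz'
    refine sq_compare (norm_nonneg _) (norm_nonneg _) h0 h1 ?_
    rw [hfg] at hz'
    linarith [hz.2, hz'.1]
  have dn : ∀ z w, ‖k.symm z - k.symm w‖ ≤ ‖z - w‖ := by
    intro z w
    refine le_of_eps fun ε h0 h1 => ?_
    refine lip_of_pointwise k.symm k.symm.continuous _ (fun w => ?_) z w
    have hkw : Tendsto (fun z => k.symm z - k.symm w) (𝓝 w) (𝓝 0) :=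
      (sub0 (k.symm w)).comp k.symm.continuous.continuousAt
    filter_upwards [(sub0 w).eventually (bd g hg ε h0), hkw.eventually (bd f hf ε h0)] with z hz hz'
    refine sq_compare (norm_nonneg _) (norm_nonneg _) h0 h1 ?_
    rw [← hfg] at hz'
    simp only [Homeomorph.apply_symm_apply] at hz'
    linarith [hz.2, hz'.1]
  have iso : Isometry k := Isometry.of_dist_eq fun z w => by
    rw [dist_eq_norm, dist_eq_norm]
    refine le_antisymm (up z w) ?_
    simpa using dn (k z) (k w)
  let ki : V ≃ᵢ V := ⟨k.toEquiv, iso⟩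
  let ka := ki.toRealAffineIsometryEquiv
  have hka : ∀ z, ka z = k z := fun z => rfl
  let L : V →L[ℝ] V := ka.linearIsometryEquiv.toContinuousLinearEquiv
  have hL : ∀ z, k z = L z + k 0 := by
    intro z
    have := ka.map_vadd 0 z
    simpa [hka, L] using this
  have hd : HasFDerivAt k L w₀ := by
    have : (k : V → V) = fun z => L z + k 0 := funext hL
    rw [this]; exact L.hasFDerivAt.add_const _
  have hLid := hd.unique hk
  intro z
  rw [hL z, hLid]; simp

lemma taylor_two {V : Type*} [NormedAddCommGroup V] [NormedSpace ℝ V]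
    (f : V → ℝ) (u : V) (hf : ContDiffAt ℝ 2 f u) (h0 : fderiv ℝ f u = 0) :
    (fun v => f (u + v) - f u - (1 / 2) * fderiv ℝ (fderiv ℝ f) u v v) =o[𝓝 0]
      fun v => ‖v‖ ^ 2 := by
  set H := fderiv ℝ (fderiv ℝ f) u with hH
  have hsymm : ∀ v w, H v w = H w v := by
    have := hf.isSymmSndFDerivAt (by simp)
    intro v w; exact this.eq v w
  have hdH : HasFDerivAt (fderiv ℝ f) H u := by
    have : ContDiffAt ℝ 1 (fderiv ℝ f) u := hf.fderiv_right (by norm_num)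
    exact (this.differentiableAt (by norm_num)).hasFDerivAt
  have hev : ∀ᶠ v in 𝓝 (0 : V), DifferentiableAt ℝ f (u + v) := by
    have h1 : ∀ᶠ x in 𝓝 u, ContDiffAt ℝ 2 f x := hf.eventually (by simp)
    have : Tendsto (fun v : V => u + v) (𝓝 0) (𝓝 u) := by
      have : Continuous fun v : V => u + v := by fun_prop
      simpa using this.tendsto 0
    exact (this.eventually h1).mono fun v hv => hv.differentiableAt (by norm_num)
  have hlo := hasFDerivAt_iff_isLittleO_nhds_zero.1 hdH
  rw [Asymptotics.isLittleO_iff]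
  intro c hc
  have hc' := hlo.def hc
  obtain ⟨δ, hδ, hball⟩ := Metric.eventually_nhds_iff_ball.1 (hev.and hc')
  filter_upwards [Metric.ball_mem_nhds (0 : V) hδ] with v hv
  set F : V → ℝ := fun v => f (u + v) - f u - (1 / 2) * H v v with hF
  have hFd : ∀ w ∈ Metric.ball (0 : V) δ, HasFDerivAt F (fderiv ℝ f (u + w) - H w) w := by
    intro w hw
    have e1 : HasFDerivAt (fun v => f (u + v)) (fderiv ℝ f (u + w)) w := by
      have := (hball w hw).1.hasFDerivAt
      have h2 := this.comp w ((hasFDerivAt_id w).const_add u)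
      rw [ContinuousLinearMap.comp_id] at h2
      exact h2
    have e2 : HasFDerivAt (fun v => H v v) (H w + H.flip w) w := by
      have := (H.hasFDerivAt (x := w)).clm_apply (hasFDerivAt_id w)
      convert! this using 1
    have e3 := (e1.sub_const (f u)).sub (e2.const_mul (1 / 2))
    convert! e3 using 1
    ext x
    simp [hsymm x w]; ring
  have hs : Convex ℝ (Metric.closedBall (0 : V) ‖v‖) := convex_closedBall _ _
  have hsub : Metric.closedBall (0 : V) ‖v‖ ⊆ Metric.ball 0 δ :=
    Metric.closedBall_subset_ball (by simpa using hv)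
  have := hs.norm_image_sub_le_of_norm_hasFDerivWithin_le (f := F) (C := c * ‖v‖) (x := 0) (y := v)
    (fun w hw => (hFd w (hsub hw)).hasFDerivWithinAt) (fun w hw => ?_) (by simp) (by simp)
  · have F0 : F 0 = 0 := by simp [hF]
    rw [F0] at this
    simp only [sub_zero] at this
    rw [Real.norm_of_nonneg (by positivity : (0:ℝ) ≤ ‖v‖ ^ 2)]
    calc ‖F v‖ ≤ _ := this
      _ = _ := by ring
  · have h2 := (hball w (hsub hw)).2
    rw [h0, sub_zero] at h2
    refine h2.trans ?_
    gcongr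
    simpa using hw

lemma exists_sqrt {V : Type*} [NormedAddCommGroup V] [NormedSpace ℝ V] [FiniteDimensional ℝ V]
    (H : V →L[ℝ] V →L[ℝ] ℝ) (_hsymm : ∀ v w, H v w = H w v) (hpos : ∀ v, v ≠ 0 → 0 < H v v) :
    ∃ S : V ≃L[ℝ] EuclideanSpace ℝ (Fin (Module.finrank ℝ V)), ∀ v, ‖S v‖ ^ 2 = H v v := by
  let B : LinearMap.BilinForm ℝ V := LinearMap.mk₂ ℝ (fun v w => H v w) (by simp) (by simp)
    (by simp) (by simp)
  obtain ⟨w, hw, ⟨e⟩⟩ := QuadraticForm.equivalent_one_zero_neg_one_weighted_sum_squared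
    (LinearMap.BilinMap.toQuadraticMap B)
  have he : ∀ v, ∑ i, w i * (e v i * e v i) = H v v := by
    intro v
    have := e.map_app v
    rw [QuadraticMap.weightedSumSquares_apply] at this
    simp only [smul_eq_mul] at this
    exact this
  have hw1 : ∀ i, w i = 1 := by
    intro i
    have h1 := he (e.toLinearEquiv.symm (Pi.single i 1))
    have h3 : e (e.toLinearEquiv.symm (Pi.single i 1)) = Pi.single i (1:ℝ) :=
      e.toLinearEquiv.apply_symm_apply _
    have h2 := hpos (e.toLinearEquiv.symm (Pi.single i 1)) (by simp)
    rw [← h1, h3] at h2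
    simp [Pi.single_apply] at h2
    rcases hw i with h | h | h <;> rw [h] at h2 ⊢ <;> norm_num at h2
  refine ⟨(e.toLinearEquiv.trans (WithLp.linearEquiv 2 ℝ _).symm).toContinuousLinearEquiv, fun v => ?_⟩
  rw [← he v, EuclideanSpace.norm_sq_eq]
  simp only [hw1, one_mul]
  refine Finset.sum_congr rfl fun i _ => ?_
  rw [Real.norm_eq_abs, sq_abs, sq]
  rfl

/-- `h` is affine. -/
lemma affine_of_eq {V : Type*} [NormedAddCommGroup V] [NormedSpace ℝ V] [FiniteDimensional ℝ V]
    (h : V ≃ₜ V) (w₀ : V) (A : V ≃L[ℝ] V) (hA : HasFDerivAt h (A : V →L[ℝ] V) w₀)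
    (f g : V → ℝ) (u : V) (hf : ContDiffAt ℝ 2 f u) (h0 : fderiv ℝ f u = 0)
    (hneg : ∀ v, v ≠ 0 → fderiv ℝ (fderiv ℝ f) u v v < 0)
    (hfg : ∀ z w, g (h z - h w) = f (u + (z - w))) : ∀ z, h z = A z + h 0 := by
  obtain ⟨S, hS⟩ := exists_sqrt (-(1 / 2 : ℝ) • fderiv ℝ (fderiv ℝ f) u)
    (by
      have := hf.isSymmSndFDerivAt (by simp)
      intro v w; simp [this.eq v w])
    (by intro v hv; have := hneg v hv; simp; linarith)
  set T : V ≃L[ℝ] EuclideanSpace ℝ (Fin (Module.finrank ℝ V)) := A.symm.trans S with hT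
  let k : EuclideanSpace ℝ (Fin (Module.finrank ℝ V)) ≃ₜ EuclideanSpace ℝ (Fin (Module.finrank ℝ V)) :=
    (S.symm.toHomeomorph.trans h).trans T.toHomeomorph
  have hk : ∀ z, k z = S (A.symm (h (S.symm z))) := fun z => rfl
  have key := rigid k (S w₀) ?_ (fun v => f (u + S.symm v)) (fun v => g (T.symm v)) (f u) ?_ ?_
  · intro z
    have := key (S z)
    simp only [hk, ContinuousLinearEquiv.symm_apply_apply, map_zero] at this
    rw [← map_add, S.injective.eq_iff] at this
    have := congrArg A this
    simpa using this
  · have h1 : HasFDerivAt h (A : V →L[ℝ] V) (S.symm (S w₀)) := by simpa using hA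
    have h2 := h1.comp (S w₀) S.symm.hasFDerivAt
    have h3 := T.hasFDerivAt.comp (S w₀) h2
    convert! h3 using 1
    ext v
    simp [hT]
  · have ht := taylor_two f u hf h0
    have hS0 : Tendsto S.symm (𝓝 0) (𝓝 0) := by simpa using S.symm.continuous.tendsto 0
    have h1 := ht.comp_tendsto hS0
    have h2 : ((fun v : V => ‖v‖ ^ 2) ∘ S.symm) =O[𝓝 0] fun v => ‖v‖ ^ 2 := by
      have := S.symm.isBigO_comp (fun v => v) (𝓝 0)
      exact this.norm_norm.pow 2
    refine (h1.trans_isBigO h2).neg_left.congr_left fun v => ?_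
    have := hS (S.symm v)
    simp at this
    simp [this]
    ring
  · intro z w
    rw [map_sub S.symm, ← hfg, hk, hk]
    simp [hT]

/-- strict local maximum -/
lemma strict_max {V : Type*} [NormedAddCommGroup V] [NormedSpace ℝ V] [FiniteDimensional ℝ V]
    (f : V → ℝ) (u : V) (hf : ContDiffAt ℝ 2 f u) (h0 : fderiv ℝ f u = 0)
    (hneg : ∀ v, v ≠ 0 → fderiv ℝ (fderiv ℝ f) u v v < 0) :
    ∀ᶠ s in 𝓝 u, f s = f u → s = u := by
  obtain ⟨S, hS⟩ := exists_sqrt (-(1 / 2 : ℝ) • fderiv ℝ (fderiv ℝ f) u)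
    (by
      have := hf.isSymmSndFDerivAt (by simp)
      intro v w; simp [this.eq v w])
    (by intro v hv; have := hneg v hv; simp; linarith)
  have ht := taylor_two f u hf h0
  have h2 : (fun v : V => ‖v‖ ^ 2) =O[𝓝 0] fun v => ‖S v‖ ^ 2 := by
    have := S.isBigO_comp_rev (fun v : V => v) (𝓝 0)
    exact this.norm_norm.pow 2
  have h3 := (ht.trans_isBigO h2).def (c := 1 / 2) (by norm_num)
  have hsub : Tendsto (fun s : V => s - u) (𝓝 u) (𝓝 0) := by
    have : Continuous fun z : V => z - u := by fun_prop
    simpa using this.tendsto u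
  filter_upwards [hsub.eventually h3] with s hs hfs
  have := hS (s - u)
  have e : (1 / 2 : ℝ) * fderiv ℝ (fderiv ℝ f) u (s - u) (s - u) = - ‖S (s - u)‖ ^ 2 := by
    rw [this]; simp; 
  rw [e] at hs
  simp only [add_sub_cancel, hfs, sub_self, zero_sub, neg_neg, norm_pow, norm_norm] at hs
  have h5 : ‖S (s - u)‖ ^ 2 = 0 := le_antisymm (by linarith) (by positivity)
  simpa [sub_eq_zero] using h5

lemma ae_diff_loc {m n : ℕ} (r : E m → E n) (hr : LocallyLipschitz r) :
    ∀ᵐ x : E m, DifferentiableAt ℝ r x := by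
  choose C t ht hC using hr
  have hopen : ∀ x, interior (t x) ∈ 𝓝 x := fun x => interior_mem_nhds.2 (ht x)
  obtain ⟨s, hs, hU⟩ := TopologicalSpace.countable_cover_nhds hopen
  have h1 : ∀ x ∈ s, ∀ᵐ y : E m, y ∈ t x → DifferentiableWithinAt ℝ r (t x) y := fun x _ =>
    (hC x).ae_differentiableWithinAt_of_mem (μ := volume)
  filter_upwards [(ae_ball_iff hs).2 h1] with y hy
  have hy' : y ∈ ⋃ x ∈ s, interior (t x) := hU ▸ mem_univ y
  simp only [mem_iUnion] at hy'
  obtain ⟨x, hx, hyx⟩ := hy'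
  exact (hy x hx (interior_subset hyx)).differentiableAt (mem_interior_iff_mem_nhds.1 hyx)

lemma everywhere_eq {m n : ℕ} (r₀ rt₀ : E m → E m) (r₁ rt₁ : E n → E m) (f ft : E m → ℝ)
    (a b : E m → ℝ) (h0 : Continuous r₀) (h0' : Continuous rt₀) (h1 : Continuous r₁)
    (h1' : Continuous rt₁) (hf : Continuous f) (hft : Continuous ft)
    (ha : ∀ᵐ y, 0 < a y) (hb : ∀ᵐ y, 0 < b y)
    (h : ∀ᵐ w : E m × E n, f (r₀ w.1 + r₁ w.2) * a w.1 = ft (rt₀ w.1 + rt₁ w.2) * b w.1) :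
    ∀ y x, f (r₀ y + r₁ x) * ft (rt₀ y + rt₁ 0) = f (r₀ y + r₁ 0) * ft (rt₀ y + rt₁ x) := by
  have h2 : ∀ᵐ y : E m, ∀ᵐ x : E n, f (r₀ y + r₁ x) * a y = ft (rt₀ y + rt₁ x) * b y :=
    Measure.ae_ae_of_ae_prod h
  have h3 : ∀ᵐ y : E m, ∀ x : E n, f (r₀ y + r₁ x) * a y = ft (rt₀ y + rt₁ x) * b y := by
    filter_upwards [h2] with y hy
    exact fun x => congrFun ((Continuous.ae_eq_iff_eq volume (f := fun x => f (r₀ y + r₁ x) * a y)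
      (g := fun x => ft (rt₀ y + rt₁ x) * b y) (by fun_prop) (by fun_prop)).1 hy) x
  intro y x
  have h4 : ∀ᵐ y : E m,
      f (r₀ y + r₁ x) * ft (rt₀ y + rt₁ 0) = f (r₀ y + r₁ 0) * ft (rt₀ y + rt₁ x) := by
    filter_upwards [h3, ha, hb] with y hy hay hby
    have e1 := hy x
    have e2 := hy 0
    have : (a y * b y) * (f (r₀ y + r₁ x) * ft (rt₀ y + rt₁ 0))
        = (a y * b y) * (f (r₀ y + r₁ 0) * ft (rt₀ y + rt₁ x)) := by
      linear_combination (b y * ft (rt₀ y + rt₁ 0)) * e1 - (b y * ft (rt₀ y + rt₁ x)) * e2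
    exact mul_left_cancel₀ (by positivity) this
  exact congrFun ((Continuous.ae_eq_iff_eq volume
    (f := fun y => f (r₀ y + r₁ x) * ft (rt₀ y + rt₁ 0))
    (g := fun y => f (r₀ y + r₁ 0) * ft (rt₀ y + rt₁ x)) (by fun_prop) (by fun_prop)).1 h4) y

lemma grad_zero {m n : ℕ} (φ φt j : E m → ℝ) (h : E m → E m) (r₁ rt₁ : E n → E m)
    (hφ : ContDiff ℝ 1 φ) (hφt : ContDiff ℝ 1 φt) (hh : Continuous h) (hr₁ : Continuous r₁)
    (hrt₁ : Continuous rt₁) (D : Set (E n)) (hD : Dense D)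
    (hDr : ∀ x ∈ D, DifferentiableAt ℝ r₁ x ∧ DifferentiableAt ℝ rt₁ x ∧
      Function.Surjective (fderiv ℝ r₁ x))
    (u : E m) (H : E m →L[ℝ] (E m →L[ℝ] ℝ)) (hH : HasStrictFDerivAt (fderiv ℝ φ) H u)
    (hHs : H.range = ⊤) (hu : fderiv ℝ φ u = 0)
    (hid : ∀ z x, φ (z + r₁ x) = φt (h z + rt₁ x) + j z)
    (z : E m) (xb : E n) (hz : z + r₁ xb = u) : fderiv ℝ φt (h z + rt₁ xb) = 0 := by
  have c1 : Continuous (fderiv ℝ φ) := hφ.continuous_fderiv (by norm_num)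
  have c2 : Continuous (fderiv ℝ φt) := hφt.continuous_fderiv (by norm_num)
  -- the gradient relation
  have hA : ∀ x ∈ D, ∃ A : E m →L[ℝ] E m, ∀ u,
      fderiv ℝ φ u = (fderiv ℝ φt (h (u - r₁ x) + rt₁ x)).comp A := by
    intro x hx
    obtain ⟨d1, d2, hs⟩ := hDr x hx
    obtain ⟨R, hR⟩ := (fderiv ℝ r₁ x).toLinearMap.exists_rightInverse_of_surjective
      (LinearMap.range_eq_top.2 hs)
    refine ⟨(fderiv ℝ rt₁ x).comp R.toContinuousLinearMap, fun u => ?_⟩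
    have e1 : HasFDerivAt (fun x' => φ ((u - r₁ x) + r₁ x')) ((fderiv ℝ φ u).comp (fderiv ℝ r₁ x)) x := by
      have a1 : HasFDerivAt φ (fderiv ℝ φ u) ((u - r₁ x) + r₁ x) := by
        rw [sub_add_cancel]; exact (hφ.differentiable (by norm_num) u).hasFDerivAt
      exact a1.comp x (d1.hasFDerivAt.const_add _)
    have e2 : HasFDerivAt (fun x' => φt (h (u - r₁ x) + rt₁ x') + j (u - r₁ x))
        ((fderiv ℝ φt (h (u - r₁ x) + rt₁ x)).comp (fderiv ℝ rt₁ x)) x := by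
      have a1 := (hφt.differentiable (by norm_num) (h (u - r₁ x) + rt₁ x)).hasFDerivAt
      exact (a1.comp x (d2.hasFDerivAt.const_add _)).add_const _
    have e3 : (fun x' => φ ((u - r₁ x) + r₁ x')) =
      (fun x' => φt (h (u - r₁ x) + rt₁ x') + j (u - r₁ x)) := funext fun x' => hid _ _
    rw [e3] at e1
    have e4 := e1.unique e2
    ext v
    have hRv : fderiv ℝ r₁ x (R v) = v := LinearMap.congr_fun hR v
    have := congrArg (fun L : E n →L[ℝ] ℝ => L (R v)) e4
    simpa [hRv] using this
  -- local boundedness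
  have cT : Continuous fun p : E n × E m => ‖fderiv ℝ φt (h (p.2 - r₁ p.1) + rt₁ p.1)‖ := by
    fun_prop
  obtain ⟨M, hM⟩ : ∃ M, M = ‖fderiv ℝ φt (h (u - r₁ xb) + rt₁ xb)‖ + 1 := ⟨_, rfl⟩
  have hMpos : 0 < M := by rw [hM]; positivity
  have hbd : ∀ᶠ p in 𝓝 (xb, u), ‖fderiv ℝ φt (h (p.2 - r₁ p.1) + rt₁ p.1)‖ < M :=
    cT.continuousAt.eventually_lt_const (by simp [hM])
  rw [nhds_prod_eq] at hbd
  obtain ⟨pa, hpa, pb, hpb, hab⟩ := eventually_prod_iff.1 hbd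
  have himg : fderiv ℝ φ '' {u | pb u} ∈ 𝓝 (0 : E m →L[ℝ] ℝ) := by
    rw [← hu, ← hH.map_nhds_eq_of_surj hHs]
    exact image_mem_map hpb
  obtain ⟨ε, hε, hball⟩ := Metric.nhds_basis_closedBall.mem_iff.1 himg
  -- bound
  have hbound : ∀ x ∈ D, pa x → ‖fderiv ℝ φt (h z + rt₁ x)‖ ≤ M / ε * ‖fderiv ℝ φ (z + r₁ x)‖ := by
    intro x hx hpx
    obtain ⟨A, hAx⟩ := hA x hx
    let As : (E m →L[ℝ] ℝ) →ₗ[ℝ] (E m →L[ℝ] ℝ) :=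
      { toFun := fun p => p.comp A
        map_add' := fun p q => by simp
        map_smul' := fun c p => by simp }
    have hAs : ∀ p, As p = p.comp A := fun p => rfl
    have hsurj : Function.Surjective As := by
      intro p
      by_cases hp : p = 0
      · exact ⟨0, by simp [hp]⟩
      have hpn : 0 < ‖p‖ := norm_pos_iff.2 hp
      have hm : (ε / ‖p‖) • p ∈ Metric.closedBall (0 : E m →L[ℝ] ℝ) ε := by
        simp [norm_smul, abs_of_pos hε, hpn.ne']
      obtain ⟨u', -, hu'⟩ := hball hm
      refine ⟨(ε / ‖p‖)⁻¹ • fderiv ℝ φt (h (u' - r₁ x) + rt₁ x), ?_⟩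
      rw [map_smul, hAs, ← hAx, hu', smul_smul, inv_mul_cancel₀ (by positivity), one_smul]
    have hinj : Function.Injective As := LinearMap.injective_iff_surjective.2 hsurj
    have hq : fderiv ℝ φ (z + r₁ x) = As (fderiv ℝ φt (h z + rt₁ x)) := by
      rw [hAs, hAx]; simp
    set p := fderiv ℝ φ (z + r₁ x) with hpdef
    by_cases hp : p = 0
    · have : fderiv ℝ φt (h z + rt₁ x) = 0 := hinj (by rw [← hq, hp, map_zero])
      rw [this, hp]; simp
    have hpn : 0 < ‖p‖ := norm_pos_iff.2 hp
    have hm : (ε / ‖p‖) • p ∈ Metric.closedBall (0 : E m →L[ℝ] ℝ) ε := by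
      simp [norm_smul, abs_of_pos hε, hpn.ne']
    obtain ⟨u', hpu', hu'⟩ := hball hm
    have e1 : (ε / ‖p‖) • fderiv ℝ φt (h z + rt₁ x) = fderiv ℝ φt (h (u' - r₁ x) + rt₁ x) := by
      apply hinj
      rw [map_smul, ← hq, hAs, ← hAx, hu']
    have e2 := (hab hpx hpu').le
    simp only at e2
    rw [← e1, norm_smul, Real.norm_of_nonneg (by positivity), div_mul_eq_mul_div,
      div_le_iff₀ hpn] at e2
    rw [div_mul_eq_mul_div, le_div_iff₀ hε]
    linarith
  have hne : (𝓝[D] xb).NeBot := mem_closure_iff_nhdsWithin_neBot.1 (hD xb)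
  have t1 : Tendsto (fun x => fderiv ℝ φt (h z + rt₁ x)) (𝓝[D] xb)
      (𝓝 (fderiv ℝ φt (h z + rt₁ xb))) := by
    have : Continuous fun x => fderiv ℝ φt (h z + rt₁ x) := by fun_prop
    exact this.continuousAt.continuousWithinAt
  have t2 : Tendsto (fun x => M / ε * ‖fderiv ℝ φ (z + r₁ x)‖) (𝓝[D] xb) (𝓝 0) := by
    have : Continuous fun x => M / ε * ‖fderiv ℝ φ (z + r₁ x)‖ := by fun_prop
    have := this.continuousAt.continuousWithinAt (x := xb) (s := D)
    simpa [ContinuousWithinAt, hz, hu] using this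
  have t3 : Tendsto (fun x => fderiv ℝ φt (h z + rt₁ x)) (𝓝[D] xb) (𝓝 0) := by
    refine squeeze_zero_norm' ?_ t2
    filter_upwards [self_mem_nhdsWithin, mem_nhdsWithin_of_mem_nhds hpa] with x hx hpx
    exact hbound x hx hpx
  exact tendsto_nhds_unique t1 t3

lemma j_const {m n : ℕ} (φ φt j : E m → ℝ) (h : E m → E m) (r₁ rt₁ : E n → E m)
    (hφ : ContDiff ℝ 1 φ) (hφt : ContDiff ℝ 1 φt) (hh : LocallyLipschitz h)
    (hs : Function.Surjective r₁) (u : E m) (hu : fderiv ℝ φ u = 0)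
    (hg : ∀ z x, z + r₁ x = u → fderiv ℝ φt (h z + rt₁ x) = 0)
    (hid : ∀ z x, φ (z + r₁ x) = φt (h z + rt₁ x) + j z) : ∀ z, j z = j 0 := by
  have hd : ∀ z, HasFDerivAt j (0 : E m →L[ℝ] ℝ) z := by
    intro z
    obtain ⟨x, hx⟩ := hs (u - z)
    have hzx : z + r₁ x = u := by rw [hx]; abel
    have e1 : HasFDerivAt (fun z' => φ (z' + r₁ x)) (0 : E m →L[ℝ] ℝ) z := by
      have a1 : HasFDerivAt φ (0 : E m →L[ℝ] ℝ) (z + r₁ x) := by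
        rw [hzx, ← hu]; exact (hφ.differentiable (by norm_num) u).hasFDerivAt
      have a2 := a1.comp z ((hasFDerivAt_id z).add_const (r₁ x))
      rw [ContinuousLinearMap.zero_comp] at a2
      exact a2
    have e2 : HasFDerivAt (fun z' => φt (h z' + rt₁ x)) (0 : E m →L[ℝ] ℝ) z := by
      have a1 : HasFDerivAt φt (0 : E m →L[ℝ] ℝ) (h z + rt₁ x) := by
        rw [← hg z x hzx]; exact (hφt.differentiable (by norm_num) _).hasFDerivAt
      rw [hasFDerivAt_iff_isLittleO] at a1 ⊢
      have ht : Tendsto (fun z' => h z' + rt₁ x) (𝓝 z) (𝓝 (h z + rt₁ x)) :=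
        (hh.continuous.continuousAt).add tendsto_const_nhds
      have a2 := a1.comp_tendsto ht
      obtain ⟨C, t, ht, hC⟩ := hh z
      have a3 : ((fun x' => x' - (h z + rt₁ x)) ∘ fun z' => h z' + rt₁ x) =O[𝓝 z]
          fun z' => z' - z := by
        refine Asymptotics.IsBigO.of_bound C ?_
        filter_upwards [ht] with z' hz'
        have := hC.dist_le_mul z' hz' z (mem_of_mem_nhds ht)
        simpa [dist_eq_norm] using this
      simpa [Function.comp_def] using a2.trans_isBigO a3
    have e3 : j = fun z' => φ (z' + r₁ x) - φt (h z' + rt₁ x) := by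
      ext z'; rw [hid]; ring
    rw [e3]
    have e4 := e1.sub e2
    rw [sub_zero] at e4
    exact e4
  intro z
  exact is_const_of_fderiv_eq_zero (𝕜 := ℝ) (fun z => (hd z).differentiableAt)
    (fun z => (hd z).fderiv) z 0

lemma escape_false {m : ℕ} (f : E m → ℝ) (hf : Continuous f) (hfi0 : Integrable f)
    (hpos : ∀ u, 0 < f u) (z : ℕ → E m) (w : E m)
    (hz : Tendsto (fun n => ‖z n‖) atTop atTop)
    (hlim : ∀ v, Tendsto (fun n => f (z n + v)) atTop (𝓝 (f (w + v)))) : False := by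
  set F : E m → ENNReal := fun u => ENNReal.ofReal (f u) with hF
  have hFc : Continuous F := ENNReal.continuous_ofReal.comp hf
  have hFint : ∫⁻ u, F u ≠ ⊤ := hfi0.lintegral_lt_top.ne
  have h0 : Tendsto (fun n => ∫⁻ u, (Metric.ball (z n) 1).indicator F u) atTop (𝓝 0) := by
    have := tendsto_lintegral_of_dominated_convergence (μ := volume)
      (F := fun n => (Metric.ball (z n) 1).indicator F) (f := fun _ => 0) F
      (fun n => hFc.measurable.indicator Metric.isOpen_ball.measurableSet)
      (fun n => Eventually.of_forall fun u => indicator_le_self _ _ _) hFint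
      (Eventually.of_forall fun u => ?_)
    · simpa using this
    · refine tendsto_const_nhds.congr' ?_
      filter_upwards [hz.eventually_gt_atTop (‖u‖ + 1)] with n hn
      rw [indicator_of_notMem]
      simp only [Metric.mem_ball, dist_eq_norm, not_lt]
      have := norm_sub_norm_le (z n) u
      rw [norm_sub_rev] at this
      linarith
  have h1 : ∀ n, ∫⁻ v, (Metric.ball (0 : E m) 1).indicator (fun v => F (z n + v)) v
      = ∫⁻ u, (Metric.ball (z n) 1).indicator F u := by
    intro n
    rw [← lintegral_add_left_eq_self ((Metric.ball (z n) 1).indicator F) (z n)]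
    congr 1
    ext v
    simp [indicator, dist_eq_norm]
  have h2 : ∫⁻ v, (Metric.ball (0 : E m) 1).indicator (fun v => F (w + v)) v ≤ 0 := by
    calc _ = ∫⁻ v, liminf (fun n => (Metric.ball (0 : E m) 1).indicator (fun v => F (z n + v)) v)
          atTop := by
          congr 1
          ext v
          refine (Tendsto.liminf_eq ?_).symm
          by_cases hv : v ∈ Metric.ball (0 : E m) 1
          · simp only [indicator_of_mem hv]
            exact (ENNReal.continuous_ofReal.tendsto _).comp (hlim v)
          · simp only [indicator_of_notMem hv]
            exact tendsto_const_nhds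
      _ ≤ liminf (fun n => ∫⁻ v, (Metric.ball (0 : E m) 1).indicator (fun v => F (z n + v)) v)
          atTop := by
          refine lintegral_liminf_le fun n => ?_
          exact (hFc.comp (continuous_const.add continuous_id)).measurable.indicator
            Metric.isOpen_ball.measurableSet
      _ = 0 := by
          simp only [h1]
          exact h0.liminf_eq
  rw [lintegral_indicator Metric.isOpen_ball.measurableSet, nonpos_iff_eq_zero] at h2
  have hpos' : 0 < ∫⁻ v in Metric.ball (0 : E m) 1, F (w + v) := by
    have hmeas : Measurable fun v => F (w + v) :=
      (hFc.comp (continuous_const.add continuous_id)).measurable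
    rw [setLIntegral_pos_iff hmeas]
    have : Function.support (fun v => F (w + v)) = univ := by
      ext v; simp [hF, hpos]
    rw [this, univ_inter]
    exact Metric.measure_ball_pos _ _ one_pos
  exact hpos'.ne' h2

lemma inv_cont {m n : ℕ} (f ft : E m → ℝ) (C : ℝ) (hf : Continuous f) (hft : Continuous ft)
    (hfi0 : Integrable f) (hpos : ∀ u, 0 < f u) (h g : E m → E m) (hh : Continuous h)
    (hgh : ∀ z, g (h z) = z) (hhg : ∀ y, h (g y) = y)
    (r₁ rt₁ : E n → E m) (hs : Function.Surjective r₁)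
    (hid : ∀ z x, f (z + r₁ x) = C * ft (h z + rt₁ x)) : Continuous g := by
  rw [continuous_iff_seqContinuous]
  intro y y0 hy
  refine tendsto_of_subseq_tendsto fun ns hns => ?_
  have hy' : Tendsto (fun k => y (ns k)) atTop (𝓝 y0) := hy.comp hns
  by_cases hb : Tendsto (fun k => ‖g (y (ns k))‖) atTop atTop
  · exfalso
    refine escape_false f hf hfi0 hpos _ (g y0) hb fun v => ?_
    obtain ⟨x, rfl⟩ := hs v
    simp only [hid, hhg]
    have : Continuous fun s => C * ft (s + rt₁ x) := by fun_prop
    exact (this.tendsto y0).comp hy'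
  · rw [tendsto_atTop] at hb
    push Not at hb
    obtain ⟨R, hR⟩ := hb
    have hfr : ∃ᶠ k in atTop, g (y (ns k)) ∈ Metric.closedBall (0 : E m) R := by
      refine hR.mono fun k hk => ?_
      simpa using hk.le
    obtain ⟨a, -, ms, hms, hlim⟩ := (isCompact_closedBall (0 : E m) R).tendsto_subseq' hfr
    refine ⟨ms, ?_⟩
    have e1 : Tendsto (fun k => h (g (y (ns (ms k))))) atTop (𝓝 (h a)) :=
      (hh.tendsto a).comp hlim
    simp only [hhg] at e1
    have e2 := tendsto_nhds_unique e1 (hy'.comp hms.tendsto_atTop)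
    have : a = g y0 := by rw [← e2, hgh]
    rw [← this]; exact hlim

/-- The image of the maximum does not depend on `x`. -/
lemma max_const {m n : ℕ} (f ft : E m → ℝ) (C : ℝ) (h : E m ≃ₜ E m)
    (r₁ rt₁ : E n → E m) (hr₁ : Continuous r₁) (hrt₁ : Continuous rt₁) (u : E m)
    (hmax : ∀ᶠ s in 𝓝 u, f s = f u → s = u)
    (hid : ∀ z x, f (z + r₁ x) = C * ft (h z + rt₁ x)) (x : E n) :
    h (u - r₁ x) + rt₁ x = h (u - r₁ 0) + rt₁ 0 := by
  have hT : ∀ x s, f (h.symm (s - rt₁ x) + r₁ x) = C * ft s := by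
    intro x s; rw [hid]; simp
  have hlc : IsLocallyConstant fun x => h (u - r₁ x) + rt₁ x := by
    rw [IsLocallyConstant.iff_eventually_eq]
    intro x
    have hc : Continuous fun x' => h.symm (h (u - r₁ x') + rt₁ x' - rt₁ x) + r₁ x := by fun_prop
    have ht : Tendsto (fun x' => h.symm (h (u - r₁ x') + rt₁ x' - rt₁ x) + r₁ x) (𝓝 x) (𝓝 u) := by
      simpa using hc.tendsto x
    filter_upwards [ht.eventually hmax] with x' hx'
    have h1 : f (h.symm (h (u - r₁ x') + rt₁ x' - rt₁ x) + r₁ x) = f u := by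
      rw [hT, ← hid]; simp
    have h2 := eq_sub_of_add_eq (hx' h1)
    rw [← h2]; simp
  exact hlc.apply_eq_of_preconnectedSpace x 0

lemma log_grad {m : ℕ} (f : E m → ℝ) (hf : ContDiff ℝ 1 f) (hpos : ∀ u, 0 < f u) :
    ContDiff ℝ 1 (fun u => Real.log (f u)) ∧
      fderiv ℝ (fun u => Real.log (f u)) = fun u => (f u)⁻¹ • fderiv ℝ f u := by
  refine ⟨hf.log fun u => (hpos u).ne', ?_⟩
  ext1 u
  exact ((hf.differentiable (by norm_num) u).hasFDerivAt.log (hpos u).ne').fderiv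

lemma log_strict {m : ℕ} (f : E m → ℝ) (hf : ContDiff ℝ 1 f) (hpos : ∀ u, 0 < f u) (u : E m)
    (h2 : ContDiffAt ℝ 2 f u) (h0 : fderiv ℝ f u = 0)
    (hneg : ∀ v, v ≠ 0 → fderiv ℝ (fderiv ℝ f) u v v < 0) :
    ∃ H : E m →L[ℝ] (E m →L[ℝ] ℝ),
      HasStrictFDerivAt (fderiv ℝ (fun u => Real.log (f u))) H u ∧ H.range = ⊤ := by
  rw [(log_grad f hf hpos).2]
  have e1 : HasStrictFDerivAt (fderiv ℝ f) (fderiv ℝ (fderiv ℝ f) u) u := by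
    have : ContDiffAt ℝ 1 (fderiv ℝ f) u := h2.fderiv_right (by norm_num)
    exact this.hasStrictFDerivAt (by norm_num)
  have e2 : HasStrictFDerivAt (fun u => (f u)⁻¹) (fderiv ℝ (fun u => (f u)⁻¹) u) u :=
    (ContDiffAt.inv hf.contDiffAt (hpos u).ne').hasStrictFDerivAt (by norm_num)
  refine ⟨_, e2.smul e1, ?_⟩
  rw [h0]
  have hinj : Function.Injective ((f u)⁻¹ • fderiv ℝ (fderiv ℝ f) u +
      (fderiv ℝ (fun u => (f u)⁻¹) u).smulRight (0 : E m →L[ℝ] ℝ)).toLinearMap := by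
    rw [← LinearMap.ker_eq_bot, LinearMap.ker_eq_bot']
    intro v hv
    by_contra hne
    have h3 := hneg v hne
    have h4 := congrArg (fun L : E m →L[ℝ] ℝ => L v) hv
    simp [(hpos u).ne'] at h4
    linarith
  rw [LinearMap.range_eq_top]
  refine (LinearMap.injective_iff_surjective_of_finrank_eq_finrank ?_).1 hinj
  rw [← (LinearMap.toContinuousLinearMap (𝕜 := ℝ) (E := E m) (F' := ℝ)).finrank_eq]
  exact Subspace.dual_finrank_eq.symm

lemma cov {m : ℕ} (A : E m →L[ℝ] E m) (hA : A.det ≠ 0) (d : E m) (F : E m → ℝ) :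
    ∫ s, F s = |A.det| * ∫ u, F (A u + d) := by
  have hinj : Function.Injective A := by
    have := (LinearMap.equivOfDetNeZero (A : E m →ₗ[ℝ] E m) hA).injective
    exact this
  have hsurj : Function.Surjective A := by
    have := (LinearMap.equivOfDetNeZero (A : E m →ₗ[ℝ] E m) hA).surjective
    exact this
  have h := integral_image_eq_integral_abs_det_fderiv_smul (volume : Measure (E m))
    (s := univ) (f := fun u => A u + d) (f' := fun _ => A) MeasurableSet.univ
    (fun x _ => (A.hasFDerivAt.add_const d).hasFDerivWithinAt)
    (fun x _ y _ hxy => hinj (by simpa using hxy)) F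
  have hi : (fun u => A u + d) '' univ = univ := by
    rw [image_univ, range_eq_univ]
    intro s
    obtain ⟨u, hu⟩ := hsurj (s - d)
    exact ⟨u, by simp [hu]⟩
  rw [hi, setIntegral_univ, setIntegral_univ] at h
  simp only [smul_eq_mul] at h
  rw [h, integral_const_mul]

lemma adm_int {m : ℕ} {f : E m → ℝ} (hf : AdmissibleDensity f) :
    Integrable f ∧ (∀ i, Integrable fun u : E m => u i * f u) ∧
      ∀ i j, Integrable fun u : E m => u i * u j * f u := by
  obtain ⟨hc, hpos, h1, -, h2⟩ := hf
  have hcf : Continuous f := hc.continuous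
  have i0 : Integrable f := Integrable.of_integral_ne_zero (by rw [h1]; norm_num)
  have ii : ∀ i, Integrable fun u : E m => u i * u i * f u := fun i =>
    Integrable.of_integral_ne_zero (by rw [h2]; norm_num)
  refine ⟨i0, fun i => ?_, fun i j => ?_⟩
  · refine (i0.add (ii i)).mono' (by fun_prop) (Eventually.of_forall fun u => ?_)
    have := hpos u
    rw [norm_mul, Real.norm_of_nonneg this.le, Real.norm_eq_abs]
    simp only [Pi.add_apply]
    have h3 : |u i| ≤ 1 + u i * u i := by
      rcases abs_cases (u i) with h | h <;> nlinarith [sq_nonneg (u i - 1), sq_nonneg (u i + 1)]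
    nlinarith
  · refine ((ii i).add (ii j)).mono' (by fun_prop) (Eventually.of_forall fun u => ?_)
    have := hpos u
    rw [norm_mul, Real.norm_of_nonneg this.le, Real.norm_eq_abs]
    simp only [Pi.add_apply]
    have h3 : |u i * u j| ≤ u i * u i + u j * u j := by
      rw [abs_le]
      constructor <;> nlinarith [sq_nonneg (u i - u j), sq_nonneg (u i + u j)]
    nlinarith

lemma mulVecE_apply {m : ℕ} (Q : Matrix (Fin m) (Fin m) ℝ) (u : E m) (i : Fin m) :
    mulVecE Q u i = ∑ k, Q i k * u k := rfl

lemma lin_mean {m : ℕ} {f : E m → ℝ} (hf : AdmissibleDensity f) (Q : Matrix (Fin m) (Fin m) ℝ)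
    (i : Fin m) : Integrable (fun u => mulVecE Q u i * f u) ∧ ∫ u, mulVecE Q u i * f u = 0 := by
  obtain ⟨i0, i1, i2⟩ := adm_int hf
  obtain ⟨hc, hpos, h1, hm, h2⟩ := hf
  have e : (fun u => mulVecE Q u i * f u) = fun u => ∑ k, Q i k * (u k * f u) := by
    ext u
    rw [mulVecE_apply, Finset.sum_mul]
    exact Finset.sum_congr rfl fun k _ => by ring
  have hi : ∀ k ∈ Finset.univ, Integrable fun u : E m => Q i k * (u k * f u) :=
    fun k _ => (i1 k).const_mul _
  rw [e]
  refine ⟨integrable_finsetSum _ hi, ?_⟩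
  rw [integral_finsetSum _ hi]
  simp [integral_const_mul, hm]

lemma lin_cov {m : ℕ} {f : E m → ℝ} (hf : AdmissibleDensity f) (Q : Matrix (Fin m) (Fin m) ℝ)
    (i j : Fin m) : ∫ u, mulVecE Q u i * mulVecE Q u j * f u = (Q * Qᵀ) i j := by
  obtain ⟨i0, i1, i2⟩ := adm_int hf
  obtain ⟨hc, hpos, h1, hm, h2⟩ := hf
  have e : (fun u => mulVecE Q u i * mulVecE Q u j * f u) =
      fun u => ∑ k, ∑ l, Q i k * Q j l * (u k * u l * f u) := by
    ext u
    rw [mulVecE_apply, mulVecE_apply, Finset.sum_mul_sum, Finset.sum_mul]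
    refine Finset.sum_congr rfl fun k _ => ?_
    rw [Finset.sum_mul]
    exact Finset.sum_congr rfl fun l _ => by ring
  have hi : ∀ k, ∀ l ∈ Finset.univ, Integrable fun u : E m => Q i k * Q j l * (u k * u l * f u) :=
    fun k l _ => (i2 k l).const_mul _
  rw [e, integral_finsetSum _ (fun k _ => integrable_finsetSum _ (hi k))]
  simp_rw [fun k => integral_finsetSum _ (hi k), integral_const_mul, h2]
  simp [Matrix.mul_apply]

lemma exists_clm {m : ℕ} (Q : Matrix (Fin m) (Fin m) ℝ) :
    ∃ A : E m →L[ℝ] E m, (∀ x, A x = mulVecE Q x) ∧ A.det = Q.det := by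
  let b := (EuclideanSpace.basisFun (Fin m) ℝ).toBasis
  refine ⟨(Matrix.toLin b b Q).toContinuousLinearMap, fun x => ?_, ?_⟩
  · have : b.repr (Matrix.toLin b b Q x) = Q *ᵥ b.repr x := by
      rw [Matrix.repr_toLin]
    ext i
    exact congrFun this i
  · change LinearMap.det (Matrix.toLin b b Q) = _
    rw [LinearMap.det_toLin]

lemma exists_mat {m : ℕ} (A : E m →L[ℝ] E m) :
    ∃ Q : Matrix (Fin m) (Fin m) ℝ, (∀ x, A x = mulVecE Q x) ∧ A.det = Q.det := by
  let b := (EuclideanSpace.basisFun (Fin m) ℝ).toBasis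
  refine ⟨LinearMap.toMatrix b b (A : E m →ₗ[ℝ] E m), fun x => ?_, ?_⟩
  · have := LinearMap.toMatrix_mulVec_repr b b (A : E m →ₗ[ℝ] E m) x
    ext i
    exact (congrFun this i).symm
  · rw [LinearMap.det_toMatrix]

lemma moments {m : ℕ} {f ft : E m → ℝ} (hf : AdmissibleDensity f) (hft : AdmissibleDensity ft)
    (A : E m →L[ℝ] E m) (hA : 0 < A.det) (d : E m) (C : ℝ) (h : ∀ u, f u = C * ft (A u + d)) :
    d = 0 ∧ ∃ Q : Matrix (Fin m) (Fin m) ℝ, Q * Qᵀ = 1 ∧ Q.det = 1 ∧ ∀ x, A x = mulVecE Q x := by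
  obtain ⟨Q, hQ, hdet⟩ := exists_mat A
  obtain ⟨i0, i1, i2⟩ := adm_int hf
  have hCd : C = |A.det| := by
    have h1 := cov A hA.ne' d ft
    have h2 : ∫ u, f u = C * ∫ u, ft (A u + d) := by
      rw [← integral_const_mul]; congr 1; ext u; exact h u
    rw [hft.2.2.1] at h1
    rw [hf.2.2.1] at h2
    have : ∫ u, ft (A u + d) ≠ 0 := fun h0 => by rw [h0] at h1; simp at h1
    exact mul_right_cancel₀ this (by rw [← h1, ← h2])
  have tr : ∀ F : E m → ℝ, ∫ s, F s * ft s = ∫ u, F (A u + d) * f u := by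
    intro F
    rw [cov A hA.ne' d (fun s => F s * ft s), ← hCd, ← integral_const_mul]
    congr 1; ext u; rw [h u]; ring
  have hd : d = 0 := by
    ext i
    have h1 := tr fun s => s i
    rw [hft.2.2.2.1 i] at h1
    obtain ⟨j1, j2⟩ := lin_mean hf Q i
    have e : (fun u => (A u + d) i * f u) = fun u => mulVecE Q u i * f u + d i * f u := by
      ext u; rw [hQ]; simp [add_mul]
    rw [e, integral_add j1 (i0.const_mul _), j2, integral_const_mul, hf.2.2.1] at h1
    simpa using h1.symm
  refine ⟨hd, Q, ?_, ?_, hQ⟩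
  · ext i j
    rw [← lin_cov hf Q i j]
    have h1 := tr fun s => s i * s j
    rw [hft.2.2.2.2 i j] at h1
    simp only [hd, add_zero, hQ] at h1
    rw [← h1, Matrix.one_apply]
  · have hQQ : Q * Qᵀ = 1 := by
      ext i j
      rw [← lin_cov hf Q i j]
      have h1 := tr fun s => s i * s j
      rw [hft.2.2.2.2 i j] at h1
      simp only [hd, add_zero, hQ] at h1
      rw [← h1, Matrix.one_apply]
    have := congrArg Matrix.det hQQ
    rw [Matrix.det_mul, Matrix.det_transpose, Matrix.det_one, ← hdet] at this
    rw [← hdet]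
    nlinarith

lemma adm_rot {m : ℕ} {f : E m → ℝ} (hf : AdmissibleDensity f) (Q : Matrix (Fin m) (Fin m) ℝ)
    (hQ : Q * Qᵀ = 1) (hdet : Q.det = 1) :
    AdmissibleDensity (fun u => f (mulVecE Qᵀ u)) := by
  obtain ⟨A, hA, hAd⟩ := exists_clm Q
  obtain ⟨B, hB, -⟩ := exists_clm Qᵀ
  have hQ' : Qᵀ * Q = 1 := mul_eq_one_comm.1 hQ
  have inv : ∀ u, mulVecE Qᵀ (mulVecE Q u) = u := by
    intro u
    simp [mulVecE, Matrix.mulVec_mulVec, hQ']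
  have tr : ∀ F : E m → ℝ, ∫ s, F s * f (mulVecE Qᵀ s) = ∫ u, F (mulVecE Q u) * f u := by
    intro F
    rw [cov A (by rw [hAd, hdet]; norm_num) 0 (fun s => F s * f (mulVecE Qᵀ s)), hAd, hdet]
    simp [hA, inv]
  refine ⟨?_, fun u => hf.2.1 _, ?_, fun i => ?_, fun i j => ?_⟩
  · have : (fun u => f (mulVecE Qᵀ u)) = f ∘ B := by ext u; simp [hB]
    rw [this]; exact hf.1.comp B.contDiff
  · have := tr fun _ => 1
    simpa [hf.2.2.1] using this
  · rw [tr fun s => s i]; exact (lin_mean hf Q i).2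
  · rw [tr fun s => s i * s j, lin_cov hf Q i j, hQ, Matrix.one_apply]

lemma backward {m n : ℕ} (r₀ rt₀ : E m → E m) (r₁ rt₁ : E n → E m) (f : E m → ℝ)
    (hr₀det : ∀ᵐ y : E m, DifferentiableAt ℝ r₀ y ∧ 0 < (fderiv ℝ r₀ y).det)
    (hf : AdmissibleDensity f) (Q : Matrix (Fin m) (Fin m) ℝ) (hQ : Q * Qᵀ = 1) (hdet : Q.det = 1)
    (h : ∀ (y : E m) (x : E n), rt₀ y + rt₁ x = mulVecE Q (r₀ y + r₁ x)) :
    ∃ ft : E m → ℝ, AdmissibleDensity ft ∧ ∀ᵐ w : E m × E n,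
      f (r₀ w.1 + r₁ w.2) * (fderiv ℝ r₀ w.1).det
        = ft (rt₀ w.1 + rt₁ w.2) * (fderiv ℝ rt₀ w.1).det := by
  refine ⟨_, adm_rot hf Q hQ hdet, ?_⟩
  obtain ⟨A, hA, hAd⟩ := exists_clm Q
  have hQ' : Qᵀ * Q = 1 := mul_eq_one_comm.1 hQ
  have inv : ∀ u, mulVecE Qᵀ (mulVecE Q u) = u := by
    intro u
    simp [mulVecE, Matrix.mulVec_mulVec, hQ']
  have hrt : rt₀ = fun y => A (r₀ y) + (A (r₁ 0) - rt₁ 0) := by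
    ext1 y
    have := h y 0
    rw [← hA, map_add] at this
    rw [eq_sub_of_add_eq this]; abel
  have hp : ∀ᵐ w : E m × E n, DifferentiableAt ℝ r₀ w.1 :=
    Measure.quasiMeasurePreserving_fst.ae (hr₀det.mono fun y hy => hy.1)
  filter_upwards [hp] with w hw
  rw [h, inv]
  congr 1
  have hd : HasFDerivAt rt₀ (A.comp (fderiv ℝ r₀ w.1)) w.1 := by
    rw [hrt]
    exact (A.hasFDerivAt.comp w.1 hw.hasFDerivAt).add_const _
  rw [hd.fderiv]
  change _ = LinearMap.det ((A : E m →ₗ[ℝ] E m) ∘ₗ (fderiv ℝ r₀ w.1 : E m →ₗ[ℝ] E m))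
  rw [LinearMap.det_comp]
  have : LinearMap.det (A : E m →ₗ[ℝ] E m) = 1 := by
    rw [← hdet, ← hAd]
  rw [this, one_mul]

lemma loclip_comp {X Y Z : Type*} [PseudoEMetricSpace X] [PseudoEMetricSpace Y]
    [PseudoEMetricSpace Z] {f : Y → Z} {g : X → Y} (hf : LocallyLipschitz f)
    (hg : LocallyLipschitz g) : LocallyLipschitz (fun x => f (g x)) := hf.comp hg

lemma forward {m n : ℕ} (r₀ : E m → E m) (hr₀lip : LocallyLipschitz r₀)
    (hr₀bij : Function.Bijective r₀)
    (hr₀inv : LocallyLipschitz (Function.invFun r₀))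
    (hr₀det : ∀ᵐ y : E m, DifferentiableAt ℝ r₀ y ∧ 0 < (fderiv ℝ r₀ y).det)
    (r₁ : E n → E m) (hr₁lip : LocallyLipschitz r₁) (hr₁surj : Function.Surjective r₁)
    (hr₁rank : ∀ᵐ x : E n, DifferentiableAt ℝ r₁ x ∧
      LinearMap.rank (fderiv ℝ r₁ x).toLinearMap = (m : Cardinal))
    (f : E m → ℝ) (hf : AdmissibleDensity f) (hfmax : LocalMaxCondition f)
    (rt₀ : E m → E m) (hrt₀lip : LocallyLipschitz rt₀) (hrt₀bij : Function.Bijective rt₀)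
    (hrt₀det : ∀ᵐ y : E m, DifferentiableAt ℝ rt₀ y ∧ 0 < (fderiv ℝ rt₀ y).det)
    (rt₁ : E n → E m) (hrt₁lip : LocallyLipschitz rt₁)
    (ft : E m → ℝ) (hft : AdmissibleDensity ft)
    (heq : ∀ᵐ w : E m × E n,
          f (r₀ w.1 + r₁ w.2) * (fderiv ℝ r₀ w.1).det
            = ft (rt₀ w.1 + rt₁ w.2) * (fderiv ℝ rt₀ w.1).det) :
    ∃ Q : Matrix (Fin m) (Fin m) ℝ, Q * Qᵀ = 1 ∧ Q.det = 1 ∧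
          ∀ (y : E m) (x : E n), rt₀ y + rt₁ x = mulVecE Q (r₀ y + r₁ x) := by
  have c0 := hr₀lip.continuous
  have c0' := hrt₀lip.continuous
  have c1 := hr₁lip.continuous
  have c1' := hrt₁lip.continuous
  have cf := hf.1.continuous
  have cft := hft.1.continuous
  have hpos := hf.2.1
  have hpost := hft.2.1
  obtain ⟨u, hu, hu2, huneg⟩ := hfmax
  have hneg : ∀ v, v ≠ 0 → fderiv ℝ (fderiv ℝ f) u v v < 0 := by
    intro v hv
    have := huneg v hv
    rw [iteratedFDeriv_two_apply] at this
    simpa using this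
  have hfu : fderiv ℝ f u = 0 := hu.fderiv_eq_zero
  have hev := everywhere_eq r₀ rt₀ r₁ rt₁ f ft _ _ c0 c0' c1 c1' cf cft
    (hr₀det.mono fun y hy => hy.2) (hrt₀det.mono fun y hy => hy.2) heq
  -- the transformation `h`
  set g₀ := Function.invFun r₀ with hg₀
  have hg1 : ∀ y, g₀ (r₀ y) = y := Function.leftInverse_invFun hr₀bij.1
  have hg2 : ∀ z, r₀ (g₀ z) = z := Function.rightInverse_invFun hr₀bij.2
  set h : E m → E m := fun z => rt₀ (g₀ z) with hh
  have hhlip : LocallyLipschitz h := loclip_comp hrt₀lip hr₀inv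
  have hhr : ∀ y, h (r₀ y) = rt₀ y := fun y => by rw [hh]; simp only [hg1]
  let φ : E m → ℝ := fun u => Real.log (f u)
  let φt : E m → ℝ := fun u => Real.log (ft u)
  let j : E m → ℝ := fun z => φ (z + r₁ 0) - φt (h z + rt₁ 0)
  have hid : ∀ z x, φ (z + r₁ x) = φt (h z + rt₁ x) + j z := by
    intro z x
    have := hev (g₀ z) x
    rw [hg2] at this
    have := congrArg Real.log this
    rw [Real.log_mul (hpos _).ne' (hpost _).ne', Real.log_mul (hpos _).ne' (hpost _).ne'] at this
    simp only [φ, φt, j, hh]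
    linarith
  have hφ := log_grad f hf.1 hpos
  have hφt := log_grad ft hft.1 hpost
  have hφu : fderiv ℝ φ u = 0 := by
    simp only [φ]; rw [hφ.2]; simp [hfu]
  obtain ⟨H, hH, hHs⟩ := log_strict f hf.1 hpos u hu2 hfu hneg
  have hD : Dense {x : E n | DifferentiableAt ℝ r₁ x ∧ DifferentiableAt ℝ rt₁ x ∧
      Function.Surjective (fderiv ℝ r₁ x)} := by
    refine Measure.dense_of_ae (μ := volume) ?_
    filter_upwards [hr₁rank, ae_diff_loc rt₁ hrt₁lip] with x hx hx'
    refine ⟨hx.1, hx', ?_⟩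
    have hr := hx.2
    have : Module.finrank ℝ (LinearMap.range (fderiv ℝ r₁ x).toLinearMap) = Module.finrank ℝ (E m) := by
      rw [finrank_euclideanSpace_fin]
      exact Module.finrank_eq_of_rank_eq hr
    exact LinearMap.range_eq_top.1 (Submodule.eq_top_of_finrank_eq this)
  have hgrad := grad_zero φ φt j h r₁ rt₁ hφ.1 hφt.1 hhlip.continuous c1 c1' _ hD
    (fun x hx => hx) u H hH hHs hφu hid
  have hj := j_const φ φt j h r₁ rt₁ hφ.1 hφt.1 hhlip hr₁surj u hφu hgrad hid
  set C := Real.exp (j 0) with hC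
  have hidf : ∀ z x, f (z + r₁ x) = C * ft (h z + rt₁ x) := by
    intro z x
    have := congrArg Real.exp (hid z x)
    rw [hj, Real.exp_add] at this
    simp only [φ, φt, Real.exp_log (hpos _), Real.exp_log (hpost _)] at this
    rw [this, mul_comm]
  -- `h` is a homeomorphism
  obtain ⟨gt, hgt1, hgt2⟩ := Function.bijective_iff_has_inverse.1 hrt₀bij
  let g : E m → E m := fun y => r₀ (gt y)
  have hgh : ∀ z, g (h z) = z := fun z => by simp only [g, hh]; rw [hgt1, hg2]
  have hhg : ∀ y, h (g y) = y := fun y => by simp only [g]; rw [hhr, hgt2]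
  have cg : Continuous g := inv_cont f ft C cf cft (adm_int hf).1 hpos h g hhlip.continuous hgh hhg
    r₁ rt₁ hr₁surj hidf
  let hm : E m ≃ₜ E m :=
    { toFun := h, invFun := g, left_inv := hgh, right_inv := hhg,
      continuous_toFun := hhlip.continuous, continuous_invFun := cg }
  have hmc := max_const f ft C hm r₁ rt₁ c1 c1' u (strict_max f u hu2 hfu hneg) hidf
  obtain ⟨ut, hut⟩ : ∃ ut, ut = h (u - r₁ 0) + rt₁ 0 := ⟨_, rfl⟩
  have hmc' : ∀ x, rt₁ x = ut - h (u - r₁ x) := by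
    intro x
    have := hmc x
    change h (u - r₁ x) + rt₁ x = h (u - r₁ 0) + rt₁ 0 at this
    rw [hut, ← this]; abel
  -- a point of differentiability
  obtain ⟨y₀, ⟨hy1, hy2⟩, hy3, hy4⟩ := (hr₀det.and hrt₀det).exists
  let A₀ : E m ≃L[ℝ] E m := (fderiv ℝ r₀ y₀).toContinuousLinearEquivOfDetNeZero hy2.ne'
  have hA₀ : (A₀ : E m →L[ℝ] E m) = fderiv ℝ r₀ y₀ := by ext1 v; rfl
  have hdg : HasFDerivAt g₀ (A₀.symm : E m →L[ℝ] E m) (r₀ y₀) := by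
    refine HasFDerivAt.of_local_left_inverse (f := r₀) hr₀inv.continuous.continuousAt ?_
      (Eventually.of_forall hg2)
    rw [hg1, hA₀]; exact hy1.hasFDerivAt
  set A : E m →L[ℝ] E m := (fderiv ℝ rt₀ y₀).comp (A₀.symm : E m →L[ℝ] E m) with hAdef
  have hdh : HasFDerivAt h A (r₀ y₀) := by
    have : HasFDerivAt rt₀ (fderiv ℝ rt₀ y₀) (g₀ (r₀ y₀)) := by rw [hg1]; exact hy3.hasFDerivAt
    exact this.comp (r₀ y₀) hdg
  have hAdet : 0 < A.det := by
    have e1 : A.comp (A₀ : E m →L[ℝ] E m) = fderiv ℝ rt₀ y₀ := by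
      ext1 v; simp [hAdef]
    have e2 : A.det * (fderiv ℝ r₀ y₀).det = (fderiv ℝ rt₀ y₀).det := by
      rw [← e1, hA₀]
      exact (LinearMap.det_comp (A : E m →ₗ[ℝ] E m) (fderiv ℝ r₀ y₀ : E m →ₗ[ℝ] E m)).symm
    exact pos_of_mul_pos_left (by rw [e2]; exact hy4) hy2.le
  let Ae : E m ≃L[ℝ] E m := A.toContinuousLinearEquivOfDetNeZero hAdet.ne'
  have hAe : (Ae : E m →L[ℝ] E m) = A := by ext1 v; rfl
  have haff : ∀ z, h z = A z + h 0 := by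
    refine affine_of_eq hm (r₀ y₀) Ae (by rw [hAe]; exact hdh) f (fun v => C * ft (ut + v)) u hu2
      hfu hneg ?_
    intro z w
    obtain ⟨x, hx⟩ := hr₁surj (u - w)
    have e1 := hidf z x
    rw [hmc' x, hx] at e1
    have e2 : u - (u - w) = w := by abel
    rw [e2] at e1
    change C * ft (ut + (h z - h w)) = _
    have e3 : u + (z - w) = z + (u - w) := by abel
    have e4 : ut + (h z - h w) = h z + (ut - h w) := by abel
    rw [e3, e4, e1]
  have hsum : ∀ z x, h z + rt₁ x = A (z + r₁ x) + (ut - A u) := by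
    intro z x
    rw [hmc' x, haff z, haff (u - r₁ x), map_sub, map_add]; abel
  have hfft : ∀ v, f v = C * ft (A v + (ut - A u)) := by
    intro v
    obtain ⟨x, hx⟩ := hr₁surj v
    have := hidf 0 x
    rw [hsum, zero_add, hx] at this
    exact this
  obtain ⟨hd0, Q, hQ1, hQ2, hQ3⟩ := moments hf hft A hAdet _ C hfft
  refine ⟨Q, hQ1, hQ2, fun y x => ?_⟩
  have := hsum (r₀ y) x
  rw [hhr, hd0, add_zero, hQ3] at this
  exact this

/-- **Observational equivalence in the separable nonlinear SEM** (Theorem `thm:matzkin`):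
`(r̃₀, r̃₁, f_Ũ)` is observationally equivalent to `(r₀, r₁, f_U)` for some admissible
density `f_Ũ` if and only if `r̃₀(y) + r̃₁(x) = Q(r₀(y) + r₁(x))` for some `Q ∈ SO(G)`. -/
theorem sem_identification
    (G K : ℕ) (hG : 1 ≤ G) (hGK : G ≤ K)
    (r₀ : E G → E G) (hr₀lip : LocallyLipschitz r₀) (hr₀bij : Function.Bijective r₀)
    (hr₀inv : LocallyLipschitz (Function.invFun r₀))
    (hr₀det : ∀ᵐ y : E G, DifferentiableAt ℝ r₀ y ∧ 0 < (fderiv ℝ r₀ y).det)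
    (r₁ : E K → E G) (hr₁lip : LocallyLipschitz r₁) (hr₁surj : Function.Surjective r₁)
    (hr₁rank : ∀ᵐ x : E K, DifferentiableAt ℝ r₁ x ∧
      LinearMap.rank (fderiv ℝ r₁ x).toLinearMap = (G : Cardinal))
    (fU : E G → ℝ) (hfU : AdmissibleDensity fU) (hfUmax : LocalMaxCondition fU)
    (rt₀ : E G → E G) (hrt₀lip : LocallyLipschitz rt₀) (hrt₀bij : Function.Bijective rt₀)
    (hrt₀det : ∀ᵐ y : E G, DifferentiableAt ℝ rt₀ y ∧ 0 < (fderiv ℝ rt₀ y).det)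
    (rt₁ : E K → E G) (hrt₁lip : LocallyLipschitz rt₁) :
    (∃ fUt : E G → ℝ, AdmissibleDensity fUt ∧
        ∀ᵐ w : E G × E K,
          fU (r₀ w.1 + r₁ w.2) * (fderiv ℝ r₀ w.1).det
            = fUt (rt₀ w.1 + rt₁ w.2) * (fderiv ℝ rt₀ w.1).det)
      ↔ ∃ Q : Matrix (Fin G) (Fin G) ℝ, Q * Qᵀ = 1 ∧ Q.det = 1 ∧
          ∀ (y : E G) (x : E K), rt₀ y + rt₁ x = mulVecE Q (r₀ y + r₁ x) := by
  constructor
  · rintro ⟨ft, hft, heq⟩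
    exact forward r₀ hr₀lip hr₀bij hr₀inv hr₀det r₁ hr₁lip hr₁surj hr₁rank fU hfU hfUmax rt₀
      hrt₀lip hrt₀bij hrt₀det rt₁ hrt₁lip ft hft heq
  · rintro ⟨Q, hQ, hdet, h⟩
    exact backward r₀ rt₀ r₁ rt₁ fU hr₀det hfU Q hQ hdet h
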